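/- Let a = (a_1,...,a_l) be a sequence of positive integers and v^{◊a}_η a canonical basis element of V(a). If η_1 = 0 then F(v^{◊a}_η) = v^{◊a}_{η'}, where η' = (1, η_2, ..., η_l); if η_1 = 1 then F(v^{◊a}_η) = 0. -/

import Mathlib

open scoped Classical

set_option maxHeartbeats 1000000
set_option synthInstance.maxHeartbeats 200000

noncomputable section

abbrev K : Type := RatFunc ℂ

noncomputable def q : K := RatFunc.X

/-- The quantum integer `[k] = (q^k - q^{-k})/(q - q^{-1})`. -/
noncomputable def qnum (k : ℕ) : K := (q ^ k - q⁻¹ ^ k) / (q - q⁻¹)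

/-- The quantum factorial `[k]! = [k][k-1]⋯[1]`. -/
noncomputable def qfact : ℕ → K
  | 0 => 1
  | k + 1 => qnum (k + 1) * qfact k

/-- The underlying vector space of `V(a_1) ⊗ ⋯ ⊗ V(a_l)`, with standard basis indexed by
sequences `η ∈ {0,1}^l`. -/
abbrev V (n : ℕ) : Type := (Fin n → Fin 2) → K

/-- The standard basis vector `v^a_η`. -/
noncomputable def eb {n : ℕ} (η : Fin n → Fin 2) : V n := fun γ => if γ = η then 1 else 0

/-- The number of `1`s in `γ` strictly before position `i` (the Koszul sign exponent). -/
def onesBefore {n : ℕ} (γ : Fin n → Fin 2) (i : Fin n) : ℕ :=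
  (Finset.univ.filter (fun k => k < i ∧ γ k = 1)).card

/-- The action of `E` on `V(a_1) ⊗ ⋯ ⊗ V(a_l)` (via the iterated comultiplication
`Δ(E) = E ⊗ K⁻¹ + 1 ⊗ E`, with the Koszul sign rule). -/
noncomputable def Eop (a : ℕ → ℕ) (n : ℕ) : Module.End K (V n) where
  toFun f := fun γ => ∑ i : Fin n,
    if γ i = 0 then
      ((-1 : K) ^ onesBefore γ i) * qnum (a i)
        * q ^ (-((∑ j ∈ Finset.univ.filter (fun j => i < j), a j : ℕ) : ℤ))
        * f (Function.update γ i 1)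
    else 0
  map_add' f g := by
    funext γ
    simp only [Pi.add_apply, ← Finset.sum_add_distrib]
    refine Finset.sum_congr rfl fun i _ => ?_
    split_ifs <;> ring
  map_smul' c f := by
    funext γ
    simp only [Pi.smul_apply, smul_eq_mul, RingHom.id_apply, Finset.mul_sum]
    refine Finset.sum_congr rfl fun i _ => ?_
    split_ifs <;> ring

/-- The action of `F` on `V(a_1) ⊗ ⋯ ⊗ V(a_l)` (via the iterated comultiplication
`Δ(F) = F ⊗ 1 + K ⊗ F`, with the Koszul sign rule). -/
noncomputable def Fop (a : ℕ → ℕ) (n : ℕ) : Module.End K (V n) where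
  toFun f := fun γ => ∑ i : Fin n,
    if γ i = 1 then
      ((-1 : K) ^ onesBefore γ i)
        * q ^ (∑ j ∈ Finset.univ.filter (fun j => j < i), a j)
        * f (Function.update γ i 0)
    else 0
  map_add' f g := by
    funext γ
    simp only [Pi.add_apply, ← Finset.sum_add_distrib]
    refine Finset.sum_congr rfl fun i _ => ?_
    split_ifs <;> ring
  map_smul' c f := by
    funext γ
    simp only [Pi.smul_apply, smul_eq_mul, RingHom.id_apply, Finset.mul_sum]
    refine Finset.sum_congr rfl fun i _ => ?_
    split_ifs <;> ring

/-- The number of entries of `η` equal to `1` (the super degree of `v_η`). -/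
def ones {m : ℕ} (η : Fin m → Fin 2) : ℕ := (Finset.univ.filter (fun i => η i = 1)).card

/-- The number of entries of `η` equal to `0`. -/
def zeros {m : ℕ} (η : Fin m → Fin 2) : ℕ := (Finset.univ.filter (fun i => η i = 0)).card

/-- The parity twist `x ↦ (-1)^{|x|}·x` (on homogeneous components). -/
noncomputable def twist {m : ℕ} (x : V m) : V m := fun η => (-1 : K) ^ ones η * x η

/-- The bar involution of `V(a_1) ⊗ ⋯ ⊗ V(a_m)`, defined inductively from
`bar v^a_i = v^a_i` on each factor by `bar (w ⊗ w') = Θ'(bar w ⊗ bar w')` with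
`Θ' = 1 + (q⁻¹ - q) E ⊗ F` (with the Koszul sign rule) and `bar q = q⁻¹`. -/
noncomputable def barV (a : ℕ → ℕ) : (m : ℕ) → V m → V m
  | 0, f => f
  | m + 1, f => fun γ =>
    if γ (Fin.last m) = 0 then
      barV a m (fun δ => f (Fin.snoc δ 0)) (fun i => γ i.castSucc)
    else
      barV a m (fun δ => f (Fin.snoc δ 1)) (fun i => γ i.castSucc)
        + (q⁻¹ - q) *
          Eop a m (twist (barV a m (fun δ => f (Fin.snoc δ 0)))) (fun i => γ i.castSucc)

def s (n : ℕ) (i : Fin (n - 1)) : Equiv.Perm (Fin n) :=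
  Equiv.swap ⟨(i : ℕ), by have := i.isLt; omega⟩ ⟨(i : ℕ) + 1, by have := i.isLt; omega⟩

def wordProd (n : ℕ) (l : List (Fin (n - 1))) : Equiv.Perm (Fin n) :=
  (l.map (s n)).prod

def len (n : ℕ) (w : Equiv.Perm (Fin n)) : ℕ :=
  sInf {k | ∃ l : List (Fin (n - 1)), l.length = k ∧ wordProd n l = w}

def bruhatLE (n : ℕ) (u w : Equiv.Perm (Fin n)) : Prop :=
  ∃ l : List (Fin (n - 1)), l.length = len n w ∧ wordProd n l = w ∧
    ∃ t : List (Fin (n - 1)), t.Sublist l ∧ wordProd n t = u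

def bruhatLT (n : ℕ) (u w : Equiv.Perm (Fin n)) : Prop :=
  bruhatLE n u w ∧ u ≠ w

/-- The parabolic subgroup of `S_n` generated by the simple transpositions indexed by `P`. -/
def parab (n : ℕ) (P : Finset (Fin (n - 1))) : Subgroup (Equiv.Perm (Fin n)) :=
  Subgroup.closure {σ | ∃ i ∈ P, σ = s n i}

/-- `w` is a shortest coset representative for `(S_k × S_{l-k}) \ S_l` (the parabolic
subgroup generated by all simple reflections except `s_k`). -/
def shortRep (l k : ℕ) (w : Equiv.Perm (Fin l)) : Prop :=
  ∀ x ∈ parab l (Finset.univ.filter (fun i : Fin (l - 1) => (i : ℕ) + 1 ≠ k)),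
    len l w ≤ len l (x * w)

/-- The minimal `{0,1}`-sequence `η_min = (0,…,0,1,…,1)` with `k` zeros. -/
def etaMin (l k : ℕ) : Fin l → Fin 2 := fun i => if (i : ℕ) < k then 0 else 1

/-- The partial order on the standard basis vectors of a weight space: within the weight
with `k` zeros, `η < γ` iff `η = η_min·u`, `γ = η_min·w` for shortest coset
representatives `u ≺ w` in the Bruhat order. -/
def seqLT (l k : ℕ) (η γ : Fin l → Fin 2) : Prop :=
  ∃ u w : Equiv.Perm (Fin l), shortRep l k u ∧ shortRep l k w ∧ bruhatLT l u w ∧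
    η = (fun i => etaMin l k (u i)) ∧ γ = (fun i => etaMin l k (w i))

/-- The bar involution of `V(a)`: the semilinear extension (with respect to the field
homomorphism `barK`, which implements `q ↦ q⁻¹`) of the map `barV` computing the bar
involution on the standard basis vectors. -/
noncomputable def barSemi (barK : K →+* K) (a : ℕ → ℕ) (l : ℕ) (f : V l) : V l :=
  barV a l (fun η => barK (f η))

/-- `v` is the canonical basis element `v^{◊a}_η` of `V(a)`: it is bar-invariant and
`v - v^a_η` is a `q·ℤ[q]`-linear combination of standard basis vectors strictly smaller
than `v^a_η`. -/
def IsCanon (barK : K →+* K) (a : ℕ → ℕ) (l : ℕ) (η : Fin l → Fin 2) (v : V l) : Prop :=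
  barSemi barK a l v = v ∧
  ∃ R : (Fin l → Fin 2) → Polynomial ℤ,
    (∀ γ, ¬ seqLT l (zeros η) γ η → R γ = 0) ∧
    v = eb η + ∑ γ : Fin l → Fin 2, (q * Polynomial.aeval q (R γ)) • eb γ


/-- The component of `f` at `⊗ v_b` in the last tensor factor. -/
noncomputable def slc {m : ℕ} (b : Fin 2) : V (m + 1) →ₗ[K] V m where
  toFun f := fun δ => f (Fin.snoc δ b)
  map_add' _ _ := rfl
  map_smul' _ _ := rfl

theorem slc_apply {m : ℕ} (b : Fin 2) (f : V (m + 1)) (δ : Fin m → Fin 2) :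
    slc b f δ = f (Fin.snoc δ b) := rfl

theorem slc_ext {m : ℕ} {f g : V (m + 1)} (h0 : slc 0 f = slc 0 g) (h1 : slc 1 f = slc 1 g) :
    f = g := by
  funext γ
  have key : ∀ b, γ (Fin.last m) = b → f γ = g γ := by
    intro b hb
    have hγ : γ = Fin.snoc (fun i => γ i.castSucc) b := by
      rw [← hb]; exact (Fin.snoc_init_self γ).symm
    have : slc b f = slc b g := by
      fin_cases b
      · exact h0
      · exact h1
    have := congrFun this (fun i => γ i.castSucc)
    rw [slc_apply, slc_apply, ← hγ] at this
    exact this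
  exact key _ rfl

theorem onesBefore_snoc_castSucc {m : ℕ} (δ : Fin m → Fin 2) (b : Fin 2) (i : Fin m) :
    onesBefore (Fin.snoc δ b : Fin (m + 1) → Fin 2) i.castSucc = onesBefore δ i := by
  unfold onesBefore
  rw [Finset.card_filter, Finset.card_filter, Fin.sum_univ_castSucc]
  have : ¬ (Fin.last m < i.castSucc) := not_lt.mpr (Fin.le_last _)
  simp [this]

theorem onesBefore_snoc_last {m : ℕ} (δ : Fin m → Fin 2) (b : Fin 2) :
    onesBefore (Fin.snoc δ b : Fin (m + 1) → Fin 2) (Fin.last m) = ones δ := by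
  unfold onesBefore ones
  rw [Finset.card_filter, Finset.card_filter, Fin.sum_univ_castSucc]
  simp [Fin.castSucc_lt_last]

theorem ones_snoc {m : ℕ} (δ : Fin m → Fin 2) (b : Fin 2) :
    ones (Fin.snoc δ b : Fin (m + 1) → Fin 2) = ones δ + (if b = 1 then 1 else 0) := by
  unfold ones
  rw [Finset.card_filter, Finset.card_filter, Fin.sum_univ_castSucc]
  simp

theorem sum_lt_castSucc {m : ℕ} (a : ℕ → ℕ) (i : Fin m) :
    (∑ j ∈ Finset.univ.filter (fun j : Fin (m + 1) => j < i.castSucc), a j)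
      = ∑ j ∈ Finset.univ.filter (fun j : Fin m => j < i), a j := by
  rw [Finset.sum_filter, Finset.sum_filter, Fin.sum_univ_castSucc]
  have : ¬ (Fin.last m < i.castSucc) := not_lt.mpr (Fin.le_last _)
  simp [this]

/-- The total weight `a_0 + ... + a_{m-1}`. -/
def tot (a : ℕ → ℕ) (m : ℕ) : ℕ := ∑ j : Fin m, a j

theorem tot_succ (a : ℕ → ℕ) (m : ℕ) : tot a (m + 1) = tot a m + a m := by
  simp [tot, Fin.sum_univ_castSucc]

theorem sum_lt_last {m : ℕ} (a : ℕ → ℕ) :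
    (∑ j ∈ Finset.univ.filter (fun j : Fin (m + 1) => j < Fin.last m), a j) = tot a m := by
  rw [Finset.sum_filter, Fin.sum_univ_castSucc]
  simp [tot, Fin.castSucc_lt_last]

theorem sum_gt_castSucc {m : ℕ} (a : ℕ → ℕ) (i : Fin m) :
    (∑ j ∈ Finset.univ.filter (fun j : Fin (m + 1) => i.castSucc < j), a j)
      = (∑ j ∈ Finset.univ.filter (fun j : Fin m => i < j), a j) + a m := by
  rw [Finset.sum_filter, Finset.sum_filter, Fin.sum_univ_castSucc]
  simp [Fin.castSucc_lt_last]

theorem sum_gt_last {m : ℕ} (a : ℕ → ℕ) :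
    (∑ j ∈ Finset.univ.filter (fun j : Fin (m + 1) => Fin.last m < j), a j) = 0 := by
  rw [Finset.sum_filter]
  apply Finset.sum_eq_zero
  intro j _
  rw [if_neg (not_lt.mpr (Fin.le_last _))]

theorem q_ne : q ≠ 0 := RatFunc.X_ne_zero

theorem Fop_apply (a : ℕ → ℕ) (n : ℕ) (f : V n) (γ : Fin n → Fin 2) :
    Fop a n f γ = ∑ i : Fin n,
    if γ i = 1 then
      ((-1 : K) ^ onesBefore γ i)
        * q ^ (∑ j ∈ Finset.univ.filter (fun j => j < i), a j)
        * f (Function.update γ i 0)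
    else 0 := rfl

theorem Eop_apply (a : ℕ → ℕ) (n : ℕ) (f : V n) (γ : Fin n → Fin 2) :
    Eop a n f γ = ∑ i : Fin n,
    if γ i = 0 then
      ((-1 : K) ^ onesBefore γ i) * qnum (a i)
        * q ^ (-((∑ j ∈ Finset.univ.filter (fun j => i < j), a j : ℕ) : ℤ))
        * f (Function.update γ i 1)
    else 0 := rfl

theorem slc_Fop0 (a : ℕ → ℕ) (m : ℕ) (f : V (m + 1)) :
    slc 0 (Fop a (m + 1) f) = Fop a m (slc 0 f) := by
  funext δ
  rw [slc_apply, Fop_apply, Fop_apply, Fin.sum_univ_castSucc]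
  simp [onesBefore_snoc_castSucc, sum_lt_castSucc, slc_apply, Fin.snoc_update]

theorem slc_Fop1 (a : ℕ → ℕ) (m : ℕ) (f : V (m + 1)) :
    slc 1 (Fop a (m + 1) f) = Fop a m (slc 1 f) + q ^ tot a m • twist (slc 0 f) := by
  funext δ
  rw [slc_apply, Fop_apply, Pi.add_apply, Fop_apply, Fin.sum_univ_castSucc]
  simp only [Fin.snoc_castSucc, Fin.snoc_last, onesBefore_snoc_castSucc, sum_lt_castSucc,
    slc_apply, Fin.snoc_update, onesBefore_snoc_last, sum_lt_last, Fin.update_snoc_last,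
    if_true, Pi.smul_apply, smul_eq_mul, twist]
  congr 1
  ring

theorem slc_Eop0 (a : ℕ → ℕ) (m : ℕ) (f : V (m + 1)) :
    slc 0 (Eop a (m + 1) f)
      = q ^ (-(a m : ℤ)) • Eop a m (slc 0 f) + qnum (a m) • twist (slc 1 f) := by
  funext δ
  rw [slc_apply, Eop_apply, Pi.add_apply, Pi.smul_apply, Eop_apply, Fin.sum_univ_castSucc]
  simp only [Fin.snoc_castSucc, Fin.snoc_last, onesBefore_snoc_castSucc, sum_gt_castSucc,
    slc_apply, Fin.snoc_update, onesBefore_snoc_last, sum_gt_last, Fin.update_snoc_last,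
    if_true, Pi.smul_apply, smul_eq_mul, twist, Finset.mul_sum, Fin.val_castSucc, Fin.val_last]
  congr 1
  · refine Finset.sum_congr rfl fun i _ => ?_
    split_ifs
    · rw [Nat.cast_add, neg_add, zpow_add₀ q_ne]
      ring
    · simp
  · simp
    ring

theorem slc_Eop1 (a : ℕ → ℕ) (m : ℕ) (f : V (m + 1)) :
    slc 1 (Eop a (m + 1) f) = q ^ (-(a m : ℤ)) • Eop a m (slc 1 f) := by
  funext δ
  rw [slc_apply, Eop_apply, Pi.smul_apply, Eop_apply, Fin.sum_univ_castSucc]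
  simp only [Fin.snoc_castSucc, Fin.snoc_last, onesBefore_snoc_castSucc, sum_gt_castSucc,
    slc_apply, Fin.snoc_update, one_ne_zero, if_false, add_zero,
    smul_eq_mul, Finset.mul_sum, Fin.val_castSucc]
  refine Finset.sum_congr rfl fun i _ => ?_
  split_ifs
  · rw [Nat.cast_add, neg_add, zpow_add₀ q_ne]
    ring
  · simp

theorem slc_twist0 {m : ℕ} (f : V (m + 1)) : slc 0 (twist f) = twist (slc 0 f) := by
  funext δ
  simp [slc_apply, twist, ones_snoc]

theorem slc_twist1 {m : ℕ} (f : V (m + 1)) : slc 1 (twist f) = - twist (slc 1 f) := by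
  funext δ
  simp [slc_apply, twist, ones_snoc, pow_succ]

theorem twist_add {m : ℕ} (f g : V m) : twist (f + g) = twist f + twist g := by
  funext δ; simp [twist, mul_add]

theorem twist_neg {m : ℕ} (f : V m) : twist (-f) = - twist f := by
  funext δ; simp [twist]

theorem twist_smul {m : ℕ} (c : K) (f : V m) : twist (c • f) = c • twist f := by
  funext δ; simp [twist]; ring

theorem twist_twist {m : ℕ} (f : V m) : twist (twist f) = f := by
  funext δ
  simp only [twist]
  rw [← mul_assoc, ← mul_pow]
  simp

theorem twist_Fop (a : ℕ → ℕ) (m : ℕ) (f : V m) : twist (Fop a m f) = - Fop a m (twist f) := by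
  induction m with
  | zero => funext δ; simp [twist, Fop_apply]
  | succ m ih =>
    apply slc_ext
    · simp only [slc_twist0, slc_Fop0, map_neg, ih]
    · simp only [slc_twist1, slc_twist0, slc_Fop1, map_neg, ih, twist_add, twist_smul,
        twist_twist]

theorem twist_Eop (a : ℕ → ℕ) (m : ℕ) (f : V m) : twist (Eop a m f) = - Eop a m (twist f) := by
  induction m with
  | zero => funext δ; simp [twist, Eop_apply]
  | succ m ih =>
    apply slc_ext
    · simp only [slc_twist1, slc_twist0, slc_Eop0, map_neg, ih, twist_add, twist_smul, twist_neg,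
        twist_twist]
      funext δ
      simp only [Pi.add_apply, Pi.sub_apply, Pi.smul_apply, Pi.neg_apply, Pi.zero_apply, smul_eq_mul]
      ring
    · simp only [slc_twist1, slc_Eop1, map_neg, ih, twist_smul]

theorem q_sq : q - q⁻¹ ≠ 0 := by
  intro h
  have h2 : q * q = 1 := by
    have := sub_eq_zero.mp h
    nth_rewrite 2 [this]
    exact mul_inv_cancel₀ q_ne
  have h3 : (Polynomial.X * Polynomial.X : Polynomial ℂ) = 1 := by
    apply RatFunc.algebraMap_injective ℂ
    rw [map_mul, map_one, RatFunc.algebraMap_X]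
    exact h2
  have := congrArg Polynomial.natDegree h3
  rw [Polynomial.natDegree_mul Polynomial.X_ne_zero Polynomial.X_ne_zero] at this
  simp at this

theorem qnum_add (k n : ℕ) : qnum (k + n) = q ^ k * qnum n + q ^ (-(n : ℤ)) * qnum k := by
  unfold qnum
  have h1 := q_sq
  have h2 := q_ne
  rw [zpow_neg, zpow_natCast]
  simp only [inv_pow, pow_add]
  field_simp
  ring

theorem EF (a : ℕ → ℕ) (m : ℕ) (f : V m) :
    Eop a m (Fop a m f) + Fop a m (Eop a m f) = qnum (tot a m) • f := by
  induction m with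
  | zero => funext δ; simp [Fop_apply, Eop_apply, qnum, tot]
  | succ m ih =>
    apply slc_ext
    · have h := ih (slc 0 f)
      simp only [map_add, map_smul, slc_Fop0, slc_Fop1, slc_Eop0, slc_Eop1, twist_add, twist_smul,
        twist_twist, twist_Fop]
      rw [tot_succ, qnum_add, add_smul, mul_smul (q ^ (-(a m : ℤ))), ← h]
      funext δ
      simp only [Pi.add_apply, Pi.sub_apply, Pi.smul_apply, Pi.neg_apply, Pi.zero_apply, smul_eq_mul]
      ring
    · have h := ih (slc 1 f)
      simp only [map_add, map_smul, slc_Fop0, slc_Fop1, slc_Eop0, slc_Eop1, twist_add, twist_smul,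
        twist_twist, twist_Eop]
      rw [tot_succ, qnum_add, add_smul, mul_smul (q ^ (-(a m : ℤ))), ← h]
      funext δ
      simp only [Pi.add_apply, Pi.sub_apply, Pi.smul_apply, Pi.neg_apply, Pi.zero_apply, smul_eq_mul]
      ring

section bar
variable (barK : K →+* K) (a : ℕ → ℕ)

theorem slc_bar0 (m : ℕ) (f : V (m + 1)) :
    slc 0 (barSemi barK a (m + 1) f) = barSemi barK a m (slc 0 f) := by
  funext δ
  simp [slc_apply, barSemi, barV]

theorem slc_bar1 (m : ℕ) (f : V (m + 1)) :
    slc 1 (barSemi barK a (m + 1) f) = barSemi barK a m (slc 1 f)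
      + (q⁻¹ - q) • Eop a m (twist (barSemi barK a m (slc 0 f))) := by
  funext δ
  simp [slc_apply, barSemi, barV]

theorem bar_add (m : ℕ) (f g : V m) :
    barSemi barK a m (f + g) = barSemi barK a m f + barSemi barK a m g := by
  induction m with
  | zero => funext δ; simp [barSemi, barV]
  | succ m ih =>
    apply slc_ext
    · simp only [slc_bar0, map_add, ih]
    · simp only [slc_bar1, slc_bar0, map_add, ih, twist_add]
      funext δ
      simp only [Pi.add_apply, Pi.sub_apply, Pi.smul_apply, Pi.neg_apply, Pi.zero_apply, smul_eq_mul]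
      ring

theorem bar_smul (m : ℕ) (c : K) (f : V m) :
    barSemi barK a m (c • f) = barK c • barSemi barK a m f := by
  induction m with
  | zero => funext δ; simp [barSemi, barV]
  | succ m ih =>
    apply slc_ext
    · simp only [slc_bar0, map_smul, ih]
    · simp only [slc_bar1, slc_bar0, map_smul, map_add, ih, twist_smul]
      funext δ
      simp only [Pi.add_apply, Pi.sub_apply, Pi.smul_apply, Pi.neg_apply, Pi.zero_apply, smul_eq_mul]
      ring

theorem bar_neg (m : ℕ) (f : V m) :
    barSemi barK a m (-f) = - barSemi barK a m f := by
  have := bar_smul barK a m (-1) f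
  simpa using this

theorem bar_twist (m : ℕ) (f : V m) :
    barSemi barK a m (twist f) = twist (barSemi barK a m f) := by
  induction m with
  | zero => funext δ; simp [barSemi, barV, twist, ones]
  | succ m ih =>
    apply slc_ext
    · simp only [slc_bar0, slc_twist0, ih]
    · simp only [slc_bar1, slc_twist0, slc_twist1, bar_neg, ih, twist_add, twist_smul, twist_Eop,
        twist_twist]
      funext δ
      simp only [Pi.add_apply, Pi.sub_apply, Pi.smul_apply, Pi.neg_apply, Pi.zero_apply, smul_eq_mul]
      ring

theorem bar_Fop (hbarKq : barK q = q⁻¹) (m : ℕ) (f : V m) :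
    barSemi barK a m (Fop a m f) = Fop a m (barSemi barK a m f) := by
  induction m with
  | zero => funext δ; simp [barSemi, barV, Fop_apply]
  | succ m ih =>
    apply slc_ext
    · simp only [slc_bar0, slc_Fop0, ih]
    · have h := EF a m (twist (barSemi barK a m (slc 0 f)))
      simp only [slc_bar1, slc_bar0, slc_Fop0, slc_Fop1, ih, bar_add, bar_smul, bar_twist, map_add,
        map_smul, map_neg, twist_Fop, map_pow, hbarKq]
      have h2 := congrArg (fun z => (q - q⁻¹) • z) h
      simp only [smul_smul] at h2
      have h3 : (q - q⁻¹) * qnum (tot a m) = q ^ tot a m - q⁻¹ ^ tot a m := by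
        unfold qnum
        exact mul_div_cancel₀ _ q_sq
      rw [h3, sub_smul] at h2
      rw [← sub_eq_zero] at h2 ⊢
      rw [← h2]
      funext δ
      simp only [Pi.add_apply, Pi.sub_apply, Pi.smul_apply, Pi.neg_apply, Pi.zero_apply, smul_eq_mul]
      ring

end bar

/-- The subring `ℤ[q]`. -/
def Zq : Subring K := (Polynomial.aeval (R := ℤ) q).range.toSubring

/-- The lattice `q ℤ[q]`. -/
def qZ : Set K := {x | ∃ r ∈ Zq, x = q * r}

theorem mem_Zq {x : K} : x ∈ Zq ↔ ∃ P : Polynomial ℤ, Polynomial.aeval q P = x := by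
  simp [Zq]

theorem q_mem : q ∈ Zq := mem_Zq.2 ⟨Polynomial.X, by simp⟩

theorem qZ_zero : (0 : K) ∈ qZ := ⟨0, Zq.zero_mem, by simp⟩

theorem qZ_add {x y : K} (hx : x ∈ qZ) (hy : y ∈ qZ) : x + y ∈ qZ := by
  obtain ⟨r, hr, rfl⟩ := hx
  obtain ⟨t, ht, rfl⟩ := hy
  exact ⟨r + t, Zq.add_mem hr ht, by ring⟩

theorem qZ_mul {x y : K} (hx : x ∈ Zq) (hy : y ∈ qZ) : x * y ∈ qZ := by
  obtain ⟨t, ht, rfl⟩ := hy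
  exact ⟨x * t, Zq.mul_mem hx ht, by ring⟩

theorem qZ_sub {x y : K} (hx : x ∈ qZ) (hy : y ∈ qZ) : x - y ∈ qZ := by
  obtain ⟨r, hr, rfl⟩ := hx
  obtain ⟨t, ht, rfl⟩ := hy
  exact ⟨r - t, Zq.sub_mem hr ht, by ring⟩

theorem qZ_sum {ι : Type} (S : Finset ι) (f : ι → K) (h : ∀ i ∈ S, f i ∈ qZ) :
    ∑ i ∈ S, f i ∈ qZ :=
  Finset.sum_induction f (· ∈ qZ) (fun _ _ => qZ_add) qZ_zero h

theorem aeval_inj : Function.Injective (fun P : Polynomial ℤ => Polynomial.aeval q P) := by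
  intro P Q h
  have key : ∀ P : Polynomial ℤ, Polynomial.aeval q P
      = algebraMap (Polynomial ℂ) K (P.map (Int.castRingHom ℂ)) := by
    intro P
    induction P using Polynomial.induction_on' with
    | add p r hp hr => simp [hp, hr]
    | monomial n c =>
      simp [Polynomial.aeval_monomial, ← Polynomial.C_mul_X_pow_eq_monomial, q]
  simp only [key] at h
  exact Polynomial.map_injective _ Int.cast_injective (RatFunc.algebraMap_injective ℂ h)

theorem qZ_bar (barK : K →+* K) (hbarKq : barK q = q⁻¹) {x : K} (hx : x ∈ qZ)
    (hb : barK x = x) : x = 0 := by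
  obtain ⟨r, hr, rfl⟩ := hx
  obtain ⟨P, rfl⟩ := mem_Zq.1 hr
  by_contra hne
  have hP : P ≠ 0 := by rintro rfl; simp at hne
  set Q : Polynomial ℤ := Polynomial.X * P with hQ
  have hQ0 : Q ≠ 0 := mul_ne_zero Polynomial.X_ne_zero hP
  have e1 : q * Polynomial.aeval q P = Polynomial.aeval q Q := by simp [hQ]
  rw [e1] at hb
  have e2 : barK (Polynomial.aeval q Q) = Polynomial.aeval q⁻¹ Q := by
    rw [← hbarKq, Polynomial.aeval_def, Polynomial.aeval_def, Polynomial.hom_eval₂]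
    congr 1
    exact RingHom.ext_int _ _
  rw [e2] at hb
  let _ : Invertible (q⁻¹) := invertibleOfNonzero (inv_ne_zero q_ne)
  have h := Polynomial.eval₂_reverse_mul_pow (algebraMap ℤ K) q⁻¹ Q
  rw [invOf_eq_inv, inv_inv, ← Polynomial.aeval_def, ← Polynomial.aeval_def, hb] at h
  have h2 : Polynomial.aeval q Q.reverse
      = Polynomial.aeval q (Q * Polynomial.X ^ Q.natDegree) := by
    rw [map_mul, map_pow, Polynomial.aeval_X, ← h, mul_assoc, ← mul_pow, inv_mul_cancel₀ q_ne,
      one_pow, mul_one]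
  have h3 := congrArg Polynomial.natDegree (aeval_inj h2)
  rw [Polynomial.natDegree_mul_X_pow _ hQ0] at h3
  have h4 := Polynomial.reverse_natDegree_le Q
  have h5 : Q.natDegree = P.natDegree + 1 := by
    rw [hQ, Polynomial.natDegree_X_mul hP]
  omega

theorem zero_of_bar (barK : K →+* K) (hbarKq : barK q = q⁻¹) (a : ℕ → ℕ) (m : ℕ) (f : V m)
    (hf : ∀ γ, f γ ∈ qZ) (hb : barSemi barK a m f = f) : f = 0 := by
  induction m with
  | zero =>
    funext δ
    exact qZ_bar barK hbarKq (hf δ) (congrFun hb δ)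
  | succ m ih =>
    have h0 : slc 0 f = 0 := by
      refine ih (slc 0 f) (fun γ => hf _) ?_
      rw [← slc_bar0, hb]
    have h1 : slc 1 f = 0 := by
      refine ih (slc 1 f) (fun γ => hf _) ?_
      have h := slc_bar1 barK a m f
      rw [hb, ← slc_bar0, hb, h0] at h
      have ht : twist (0 : V m) = 0 := by funext δ; simp [twist]
      rw [ht, map_zero, smul_zero, add_zero] at h
      exact h.symm
    apply slc_ext
    · rw [h0, map_zero]
    · rw [h1, map_zero]

theorem Fop_qZ (a : ℕ → ℕ) (m : ℕ) (f : V m) (hf : ∀ γ, f γ ∈ qZ) (γ : Fin m → Fin 2) :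
    Fop a m f γ ∈ qZ := by
  rw [Fop_apply]
  apply qZ_sum
  intro i _
  split_ifs
  · exact qZ_mul (Zq.mul_mem (Zq.pow_mem (Zq.neg_mem Zq.one_mem) _) (Zq.pow_mem q_mem _)) (hf _)
  · exact qZ_zero

/-- Canonical elements are congruent to standard basis vectors modulo `q ℤ[q]`. -/
theorem canon_sub {barK : K →+* K} {a : ℕ → ℕ} {l : ℕ} {η : Fin l → Fin 2} {v : V l}
    (hv : IsCanon barK a l η v) (γ : Fin l → Fin 2) : (v - eb η) γ ∈ qZ := by
  obtain ⟨_, R, _, rfl⟩ := hv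
  rw [add_sub_cancel_left, Finset.sum_apply]
  apply qZ_sum
  intro δ _
  rw [Pi.smul_apply, smul_eq_mul]
  unfold eb
  split_ifs
  · exact ⟨_, mem_Zq.2 ⟨R δ, rfl⟩, by ring⟩
  · rw [mul_zero]; exact qZ_zero

/-- All terms of `F v_η` other than the one at the first position lie in `q ℤ[q]`. -/
theorem Fop_eb_term (a : ℕ → ℕ) (ha : ∀ i, 0 < a i) (m : ℕ) (f : V (m + 1))
    (hf : ∀ γ, f γ ∈ Zq) (γ : Fin (m + 1) → Fin 2) :
    Fop a (m + 1) f γ - (if γ 0 = 1 then f (Function.update γ 0 0) else 0) ∈ qZ := by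
  rw [Fop_apply, Fin.sum_univ_succ]
  have e : onesBefore γ 0 = 0 := by simp [onesBefore]
  have e2 : (∑ j ∈ Finset.univ.filter (fun j : Fin (m + 1) => j < 0), a j) = 0 := by simp
  rw [e, e2, pow_zero, pow_zero, one_mul, one_mul, add_sub_cancel_left]
  apply qZ_sum
  intro i _
  split_ifs
  · have hpos : 0 < ∑ j ∈ Finset.univ.filter (fun j : Fin (m + 1) => j < i.succ), a j := by
      apply Finset.sum_pos (fun j _ => ha _)
      exact ⟨0, by simp⟩
    obtain ⟨n, hn⟩ := Nat.exists_eq_succ_of_ne_zero hpos.ne'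
    rw [hn]
    refine ⟨(-1) ^ onesBefore γ i.succ * q ^ n * f (Function.update γ i.succ 0), ?_, ?_⟩
    · exact Zq.mul_mem (Zq.mul_mem (Zq.pow_mem (Zq.neg_mem Zq.one_mem) _) (Zq.pow_mem q_mem _))
        (hf _)
    · rw [pow_succ]; ring
  · exact qZ_zero

theorem eb_mem {l : ℕ} (η γ : Fin l → Fin 2) : (eb η : V l) γ ∈ Zq := by
  unfold eb
  split_ifs
  · exact Zq.one_mem
  · exact Zq.zero_mem

/-!
STATEMENT 16: Let `a = (a_1,…,a_l)` be a sequence of positive integers and `v^{◊a}_η` a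
canonical basis element of `V(a)`.  If `η_1 = 0` then `F(v^{◊a}_η) = v^{◊a}_{η'}` where
`η' = (1, η_2, …, η_l)`; if `η_1 = 1` then `F(v^{◊a}_η) = 0`.
-/

theorem statement16 (l : ℕ) (hl : 0 < l) (a : ℕ → ℕ) (ha : ∀ i, 0 < a i)
    (barK : K →+* K) (hbarKq : barK q = q⁻¹)
    (hbarKc : ∀ z : ℂ, barK (algebraMap ℂ K z) = algebraMap ℂ K z)
    (η : Fin l → Fin 2) (v : V l) (hv : IsCanon barK a l η v) :
    (η ⟨0, hl⟩ = 0 →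
      ∀ w : V l, IsCanon barK a l (Function.update η ⟨0, hl⟩ 1) w → Fop a l v = w) ∧
    (η ⟨0, hl⟩ = 1 → Fop a l v = 0) := by
  obtain ⟨m, rfl⟩ : ∃ m, l = m + 1 := ⟨l - 1, by omega⟩
  have h00 : (⟨0, hl⟩ : Fin (m + 1)) = 0 := rfl
  rw [h00]
  have hF : barSemi barK a (m + 1) (Fop a (m + 1) v) = Fop a (m + 1) v := by
    rw [bar_Fop barK a hbarKq, hv.1]
  have hdec : Fop a (m + 1) v = Fop a (m + 1) (eb η) + Fop a (m + 1) (v - eb η) := by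
    rw [← map_add]; congr 1; abel
  have hmod := Fop_qZ a (m + 1) _ (canon_sub hv)
  have hterm := Fop_eb_term a ha m (eb η) (eb_mem η)
  constructor
  · intro h0 w hw
    rw [← sub_eq_zero]
    apply zero_of_bar barK hbarKq a
    · intro γ
      have e : (if γ 0 = 1 then (eb η : V (m + 1)) (Function.update γ 0 0) else 0)
          = (eb (Function.update η 0 1) : V (m + 1)) γ := by
        unfold eb
        by_cases h : γ = Function.update η 0 1
        · subst h
          simp [h0]
        · rw [if_neg h]
          split_ifs with h1 h2
          · exact absurd (by rw [← h2]; simp [← h1]) h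
          · rfl
          · rfl
      have h1 := hterm γ
      rw [e] at h1
      have h2 := canon_sub hw γ
      have := qZ_sub (qZ_add h1 (hmod γ)) h2
      rw [hdec]
      convert this using 1
      simp only [Pi.sub_apply, Pi.add_apply, h00]
      ring
    · rw [sub_eq_add_neg, bar_add, bar_neg, hF, hw.1]
  · intro h1
    apply zero_of_bar barK hbarKq a _ _ _ hF
    intro γ
    have e : (if γ 0 = 1 then (eb η : V (m + 1)) (Function.update γ 0 0) else 0) = 0 := by
      unfold eb
      split_ifs with h2 h3
      · rw [← h3] at h1; simp at h1
      · rfl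
      · rfl
    have h2 := hterm γ
    rw [e, sub_zero] at h2
    rw [hdec]
    exact qZ_add h2 (hmod γ)
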